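/- Let ρ = e^{2πi/3} ∈ ℍ and let J = E4^3/(E4^3 − E6^2). Then J vanishes to order exactly 3 at ρ, i.e. J(ρ) = J'(ρ) = J''(ρ) = 0 and J'''(ρ) ≠ 0, and the fourth derivative satisfies J''''(ρ) = 12 · (1+ρ)/(1−ρ) · J'''(ρ). -/

import Mathlib

open Complex Filter Topology

noncomputable section

/-- The nome `q = e^{2πiτ}`. -/
def qq (τ : ℂ) : ℂ := Complex.exp (2 * Real.pi * Complex.I * τ)

/-- The Eisenstein series `E₄(τ) = 1 + 240 Σ_{n≥1} σ₃(n) qⁿ`. -/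
def E4 (τ : ℂ) : ℂ := 1 + 240 * ∑' n : ℕ, (∑ d ∈ (n + 1).divisors, (d : ℂ) ^ 3) * qq τ ^ (n + 1)

/-- The Eisenstein series `E₆(τ) = 1 − 504 Σ_{n≥1} σ₅(n) qⁿ`. -/
def E6 (τ : ℂ) : ℂ := 1 - 504 * ∑' n : ℕ, (∑ d ∈ (n + 1).divisors, (d : ℂ) ^ 5) * qq τ ^ (n + 1)

/-- The normalized elliptic modular function `J = E₄³ / (E₄³ − E₆²)`. -/
def J (τ : ℂ) : ℂ := E4 τ ^ 3 / (E4 τ ^ 3 - E6 τ ^ 2)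

/-- The Dedekind eta function `η(τ) = e^{πiτ/12} ∏_{n≥1} (1 − qⁿ)`. -/
def dedekindEta (τ : ℂ) : ℂ := Complex.exp (Real.pi * Complex.I * τ / 12) * ∏' n : ℕ, (1 - qq τ ^ (n + 1))

/-- The elliptic point `ρ = e^{2πi/3}`. -/
def rho : ℂ := Complex.exp (2 * Real.pi * Complex.I / 3)

/-!
`E₄` vanishes at `ρ` because `ρ` is fixed by `ST`, whose automorphy factor `ρ + 1` has fourth power
different from `1`. The zero is simple: `E₄' = -(2πi/3) E₆` at a zero of `E₄`, by Ramanujan's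
identity `∂E₄ = -E₆ / 3` for the Serre derivative, and `E₆` does not vanish there because
`E₄³ - E₆² = 1728 Δ` has no zeros. Hence `J` has order exactly `3` at `ρ`. Finally `J ∘ φ = J` for
`φ z = -1 / (z + 1)`, which fixes `ρ`; since the derivatives of `J` at `ρ` of order less than `3`
vanish, only two terms survive when `J ∘ φ` is differentiated four times:
`J⁗(ρ) = φ'(ρ)⁴ J⁗(ρ) + 6 φ'(ρ)² φ''(ρ) J‴(ρ)`, where `φ'(ρ) = ρ²` and `φ''(ρ) = 2`.
-/

open UpperHalfPlane hiding I J
open Derivative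
open scoped MatrixGroups ModularForm Manifold Real ArithmeticFunction.sigma

section HigherChainRule

variable {𝕜 : Type*} [NontriviallyNormedField 𝕜]

lemma iteratedDeriv_sub_pow_self (n k : ℕ) (a : 𝕜) :
    iteratedDeriv k (fun z ↦ (z - a) ^ n) a = if k = n then (n.factorial : 𝕜) else 0 := by
  rw [iteratedDeriv_comp_sub_const k (fun z : 𝕜 ↦ z ^ n)]
  beta_reduce
  rw [sub_self, iteratedDeriv_fun_pow_zero]
  split_ifs <;> simp

lemma iteratedDeriv_neg_inv_add_one (k : ℕ) (z : 𝕜) :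
    iteratedDeriv k (fun z : 𝕜 ↦ -(z + 1)⁻¹) z =
      (-1) ^ (k + 1) * k.factorial * (z + 1)⁻¹ ^ (k + 1) := by
  have hinv := congrFun (iter_deriv_inv_linear k (1 : 𝕜) 1) z
  simp only [one_mul, one_pow, mul_one] at hinv
  have hpow : (z + 1) ^ (-1 - k : ℤ) = (z + 1)⁻¹ ^ (k + 1) := by
    rw [inv_pow, ← zpow_natCast, ← zpow_neg]
    congr 1
    push_cast
    ring
  rw [iteratedDeriv_fun_neg, iteratedDeriv_eq_iterate, hinv, hpow]
  ring

variable {f g φ : 𝕜 → 𝕜} {a : 𝕜} {n : ℕ}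

lemma analyticAt_dslope (hf : AnalyticAt 𝕜 f a) : AnalyticAt 𝕜 (dslope f a) a :=
  let ⟨_, hp⟩ := hf
  ⟨_, hp.has_fpower_series_dslope_fslope⟩

variable [CompleteSpace 𝕜]

lemma iteratedDeriv_of_eventuallyEq_sub_pow_mul (hg : AnalyticAt 𝕜 g a)
    (hfg : f =ᶠ[𝓝 a] fun z ↦ (z - a) ^ n * g z) (k : ℕ) :
    iteratedDeriv k f a = k.descFactorial n * iteratedDeriv (k - n) g a := by
  rw [hfg.iteratedDeriv_eq, iteratedDeriv_fun_mul (by fun_prop) hg.contDiffAt]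
  simp only [iteratedDeriv_sub_pow_self, mul_ite, ite_mul, mul_zero, zero_mul,
    Finset.sum_ite_eq', Finset.mem_range]
  split_ifs with hn
  · rw [Nat.descFactorial_eq_factorial_mul_choose]
    push_cast
    ring
  · simp [Nat.descFactorial_of_lt (by lia : k < n)]

lemma iteratedDeriv_two_eq_two_mul_deriv_dslope (hf : AnalyticAt 𝕜 f a) :
    iteratedDeriv 2 f a = 2 * deriv (dslope f a) a := by
  have hsub : (fun z ↦ f z - f a) =ᶠ[𝓝 a] fun z ↦ (z - a) ^ 1 * dslope f a z :=
    .of_forall fun z ↦ by simpa using (sub_smul_dslope f a z).symm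
  simpa [iteratedDeriv_succ] using
    iteratedDeriv_of_eventuallyEq_sub_pow_mul (analyticAt_dslope hf) hsub 2

lemma iteratedDeriv_succ_comp_of_le_analyticOrderAt (hf : AnalyticAt 𝕜 f (φ a))
    (hφ : AnalyticAt 𝕜 φ a) (hn : n ≤ analyticOrderAt f (φ a)) :
    iteratedDeriv (n + 1) (f ∘ φ) a =
      deriv φ a ^ (n + 1) * iteratedDeriv (n + 1) f (φ a) +
        (n + 1).choose 2 * deriv φ a ^ (n - 1) * iteratedDeriv 2 φ a * iteratedDeriv n f (φ a) := by
  obtain ⟨g, hg, hfg⟩ := (natCast_le_analyticOrderAt hf).mp hn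
  set s := dslope φ a with hs_def
  have hs : AnalyticAt 𝕜 s a := analyticAt_dslope hφ
  have hφs (z : 𝕜) : φ z - φ a = (z - a) * s z := (sub_smul_dslope φ a z).symm
  have hcomp : f ∘ φ =ᶠ[𝓝 a] fun z ↦ (z - a) ^ n * (s ^ n * g ∘ φ) z := by
    filter_upwards [hφ.continuousAt.eventually hfg] with z hz
    simp [hz, hφs, mul_pow, mul_assoc]
  have hprod : deriv (s ^ n * g ∘ φ) a =
      n * s a ^ (n - 1) * deriv s a * g (φ a) + s a ^ (n + 1) * deriv g (φ a) := by
    have hd := (hs.differentiableAt.hasDerivAt.pow n).mul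
      (hg.differentiableAt.hasDerivAt.comp a hφ.differentiableAt.hasDerivAt)
    rw [hd.deriv, ← dslope_same φ, ← hs_def]
    simp only [Pi.pow_apply, Function.comp_apply]
    ring
  have hchoose : ((n + 1).choose 2 * 2 : 𝕜) = (n + 1) * n := by
    simpa using congrArg (Nat.cast (R := 𝕜)) (Nat.add_one_mul_choose_eq n 1).symm
  have hfac : ((n + 1).descFactorial n : 𝕜) = n.factorial * (n + 1) := by
    simp [Nat.descFactorial_eq_factorial_mul_choose, Nat.choose_succ_self_right]
  rw [iteratedDeriv_of_eventuallyEq_sub_pow_mul ((hs.pow n).mul (hg.comp hφ)) hcomp,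
    iteratedDeriv_of_eventuallyEq_sub_pow_mul hg hfg,
    iteratedDeriv_of_eventuallyEq_sub_pow_mul hg hfg,
    iteratedDeriv_two_eq_two_mul_deriv_dslope hφ, ← dslope_same φ, ← hs_def]
  simp only [Nat.add_sub_cancel_left, Nat.sub_self, iteratedDeriv_one, iteratedDeriv_zero, hprod,
    hfac, Nat.descFactorial_self]
  linear_combination -(s a ^ (n - 1) * deriv s a * n.factorial * g (φ a)) * hchoose

end HigherChainRule

section CuspLimits

variable {h : ℝ} {f : ℍ → ℂ} {c : ℂ}

lemma hasDerivAt_qParam (h : ℝ) (z : ℂ) : HasDerivAt (Function.Periodic.qParam h)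
    (2 * π * Complex.I / h * Function.Periodic.qParam h z) z := by
  have := (((hasDerivAt_id z).const_mul (2 * π * Complex.I)).div_const (h : ℂ)).cexp
  change HasDerivAt (fun w ↦ cexp (2 * π * Complex.I * w / h)) _ z
  simpa [Function.Periodic.qParam, mul_comm] using this

lemma tendsto_atImInfty_of_hasSum_qExpansion {c : ℕ → ℂ} (hh : 0 < h)
    (hf : ∀ τ : ℍ, HasSum (fun m ↦ c m • Function.Periodic.qParam h τ ^ m) (f τ)) :
    Tendsto f atImInfty (𝓝 (c 0)) := by
  let g : ℍ → ℂ := fun τ ↦ (f τ - c 0) / Function.Periodic.qParam h τ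
  have hq (τ : ℍ) : Function.Periodic.qParam h τ ≠ 0 := Function.Periodic.qParam_ne_zero _
  have hg : IsBoundedAtImInfty g := by
    refine isBoundedAtImInfty_of_hasSum_qExpansion (c := fun m ↦ c (m + 1)) hh fun τ ↦ ?_
    have hshift := ((hasSum_nat_add_iff' 1).mpr (hf τ)).div_const (Function.Periodic.qParam h τ)
    simpa [g, pow_succ, ← mul_assoc, hq] using hshift
  have hfg : f = fun τ : ℍ ↦ c 0 + Function.Periodic.qParam h τ * g τ := by
    ext τ
    simp [g, mul_div_cancel₀ _ (hq τ)]
  have hqg : Tendsto (fun τ : ℍ ↦ Function.Periodic.qParam h τ * g τ) atImInfty (𝓝 0) :=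
    (qParam_tendsto_atImInfty hh).zero_mul_isBoundedUnder_le hg.isBoundedUnder_le
  rw [hfg]
  simpa using hqg.const_add (c 0)

lemma tendsto_E2_atImInfty : Tendsto EisensteinSeries.E2 atImInfty (𝓝 1) :=
  tendsto_atImInfty_of_hasSum_qExpansion
    (c := fun m ↦ (if m = 0 then 1 else -24 * σ 1 m : ℂ)) one_pos fun τ ↦ by
      simpa [Function.Periodic.qParam] using EisensteinSeries.hasSum_qExpansion_E2 (z := τ)

lemma normalizedDerivOfComplex_eq_qParam_mul_deriv_cuspFunction (hh : 0 < h)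
    (hfper : Function.Periodic (f ∘ ofComplex) h) (hfhol : MDiff f)
    (hfbdd : IsBoundedAtImInfty f) (τ : ℍ) :
    normalizedDerivOfComplex f τ = Function.Periodic.qParam h τ *
      deriv (cuspFunction h f) (Function.Periodic.qParam h τ) / h := by
  have hcusp : f ∘ ofComplex = cuspFunction h f ∘ Function.Periodic.qParam h :=
    funext fun w ↦ (Function.Periodic.eq_cuspFunction hh.ne' hfper w).symm
  have hd := differentiableAt_cuspFunction hh hfper hfhol hfbdd
    (Function.Periodic.norm_qParam_lt_one hh τ.im_pos)
  rw [normalizedDerivOfComplex, hcusp, (hd.hasDerivAt.comp _ (hasDerivAt_qParam h τ)).deriv]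
  field_simp [two_pi_I_ne_zero]

lemma tendsto_normalizedDerivOfComplex_atImInfty (hh : 0 < h)
    (hfper : Function.Periodic (f ∘ ofComplex) h) (hfhol : MDiff f)
    (hfbdd : IsBoundedAtImInfty f) :
    Tendsto (normalizedDerivOfComplex f) atImInfty (𝓝 0) := by
  have hq := qParam_tendsto_atImInfty hh
  have hderiv := (analyticAt_cuspFunction_zero hh hfper hfhol hfbdd).deriv.continuousAt.tendsto
  rw [funext (normalizedDerivOfComplex_eq_qParam_mul_deriv_cuspFunction hh hfper hfhol hfbdd)]
  simpa [Function.comp_def] using (hq.mul (hderiv.comp hq)).div_const (h : ℂ)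

lemma tendsto_serreDerivative_atImInfty (k : ℂ) (hh : 0 < h)
    (hfper : Function.Periodic (f ∘ ofComplex) h) (hfhol : MDiff f)
    (hf : Tendsto f atImInfty (𝓝 c)) :
    Tendsto (serreDerivative k f) atImInfty (𝓝 (-(k / 12 * c))) := by
  have hD := tendsto_normalizedDerivOfComplex_atImInfty hh hfper hfhol (hf.isBigO_one ℝ)
  simpa [serreDerivative_eq, div_eq_mul_inv] using
    hD.sub ((tendsto_E2_atImInfty.const_mul (k * 12⁻¹)).mul hf)

end CuspLimits

section LevelOne

variable {k : ℤ}

lemma tendsto_coeff_zero_qExpansion_atImInfty (f : ModularForm 𝒮ℒ k) :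
    Tendsto f atImInfty (𝓝 ((qExpansion 1 f).coeff 0)) :=
  tendsto_atImInfty_of_hasSum_qExpansion one_pos
    (ModularForm.hasSum_qExpansion f one_pos one_mem_strictPeriods_SL)

lemma tendsto_serreDerivative_modularForm_atImInfty (f : ModularForm 𝒮ℒ k) :
    Tendsto (serreDerivative k f) atImInfty (𝓝 (-(k / 12 * (qExpansion 1 f).coeff 0))) :=
  tendsto_serreDerivative_atImInfty k one_pos
    (SlashInvariantFormClass.periodic_comp_ofComplex f one_mem_strictPeriods_SL) f.holo'
    (tendsto_coeff_zero_qExpansion_atImInfty f)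

/-- The Serre derivative `∂f = (2πi)⁻¹ f' - k/12 E₂ f` of a level one modular form `f` of weight
`k`, bundled as a modular form of weight `k + 2`. -/
def serreDerivativeForm (f : ModularForm 𝒮ℒ k) : ModularForm 𝒮ℒ (k + 2) where
  toFun := serreDerivative k f
  slash_action_eq' := by
    rintro _ ⟨γ, rfl⟩
    exact serreDerivative_slash_invariant f.holo' (f.slash_action_eq' _ ⟨γ, rfl⟩)
  holo' := serreDerivative_mdifferentiable _ f.holo'
  bdd_at_cusps' {c} hc := by
    rw [Subgroup.IsArithmetic.isCusp_iff_isCusp_SL2Z] at hc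
    rw [OnePoint.isBoundedAt_iff_forall_SL2Z hc]
    intro γ _
    have hγ := serreDerivative_slash_invariant (γ := γ) f.holo' (f.slash_action_eq' _ ⟨γ, rfl⟩)
    exact (congrArg IsBoundedAtImInfty hγ).mpr
      ((tendsto_serreDerivative_modularForm_atImInfty f).isBigO_one ℝ)

lemma serreDerivative_E₄ (τ : ℍ) :
    serreDerivative 4 ModularForm.E₄ τ = -(1 / 3) * ModularForm.E₆ τ := by
  obtain ⟨c, hc⟩ := exists_smul_eq_of_finrank_eq_one
    (Module.rank_eq_one_iff_finrank_eq_one.mp ModularForm.levelOne_weight_six_rank_one)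
    (EisensteinSeries.E_ne_zero _ ⟨3, rfl⟩ : ModularForm.E₆ ≠ 0)
    (serreDerivativeForm ModularForm.E₄)
  have hc' : serreDerivative (4 : ℤ) ModularForm.E₄ = fun τ ↦ c * ModularForm.E₆ τ :=
    funext fun τ ↦ (DFunLike.congr_fun hc τ).symm
  have hlim := tendsto_serreDerivative_modularForm_atImInfty ModularForm.E₄
  have hlim' := (tendsto_coeff_zero_qExpansion_atImInfty ModularForm.E₆).const_mul c
  rw [EisensteinSeries.E_qExpansion_coeff_zero _ ⟨2, rfl⟩, hc'] at hlim
  rw [EisensteinSeries.E_qExpansion_coeff_zero _ ⟨3, rfl⟩] at hlim'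
  have hc_eq : c = -(1 / 3) := by
    linear_combination tendsto_nhds_unique hlim' hlim
  rw [← hc_eq]
  exact congrFun hc' τ

lemma slashInvariantForm_eq_zero_of_smul_eq_self {Γ : Subgroup (GL (Fin 2) ℝ)} [Γ.HasDetOne]
    {F : Type*} [FunLike F ℍ ℂ] [SlashInvariantFormClass F Γ k] (f : F) {γ : GL (Fin 2) ℝ}
    (hγ : γ ∈ Γ) {τ : ℍ} (hτ : γ • τ = τ) (hk : denom γ τ ^ k ≠ 1) : f τ = 0 := by
  have hf := SlashInvariantForm.slash_action_eqn'' f hγ τ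
  rw [hτ] at hf
  by_contra h0
  exact hk (mul_right_cancel₀ h0 (by rw [one_mul, ← hf]))

end LevelOne

section EisensteinSeries

lemma tsum_divisors_eq_tsum_sigma (k : ℕ) (z : ℂ) :
    ∑' n : ℕ, (∑ d ∈ (n + 1).divisors, (d : ℂ) ^ k) * qq z ^ (n + 1) =
      ∑' n : ℕ+, (σ k n : ℂ) * cexp (2 * π * Complex.I * z) ^ (n : ℤ) := by
  rw [← tsum_pnat_eq_tsum_succ (f := fun n ↦ (∑ d ∈ n.divisors, (d : ℂ) ^ k) * qq z ^ n)]
  simp [ArithmeticFunction.sigma_apply, qq]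

lemma E4_coe (τ : ℍ) : E4 τ = ModularForm.E₄ τ := by
  rw [EisensteinSeries.q_expansion_bernoulli _ ⟨2, rfl⟩, E4, tsum_divisors_eq_tsum_sigma]
  norm_num [bernoulli_eq_bernoulli'_of_ne_one, bernoulli'_four]

lemma E6_coe (τ : ℍ) : E6 τ = ModularForm.E₆ τ := by
  rw [EisensteinSeries.q_expansion_bernoulli _ ⟨3, rfl⟩, E6, tsum_divisors_eq_tsum_sigma]
  norm_num [show bernoulli 6 = 1 / 42 by decide +kernel]

lemma eventuallyEq_comp_ofComplex {α : Type*} {F : ℂ → α} {f : ℍ → α} (hF : ∀ τ : ℍ, F τ = f τ)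
    (τ : ℍ) : F =ᶠ[𝓝 (τ : ℂ)] f ∘ ofComplex := by
  filter_upwards [isOpen_upperHalfPlaneSet.mem_nhds τ.im_pos] with w hw
  simpa [ofComplex_apply_of_im_pos hw] using hF ⟨w, hw⟩

lemma analyticAt_of_coe_eq {F : ℂ → ℂ} {f : ℍ → ℂ} (hf : MDiff f) (hF : ∀ τ : ℍ, F τ = f τ)
    (τ : ℍ) : AnalyticAt ℂ F τ :=
  ((UpperHalfPlane.mdifferentiable_iff.mp hf).analyticAt
    (isOpen_upperHalfPlaneSet.mem_nhds τ.im_pos)).congr (eventuallyEq_comp_ofComplex hF τ).symm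

lemma analyticAt_E4 (τ : ℍ) : AnalyticAt ℂ E4 τ :=
  analyticAt_of_coe_eq ModularForm.E₄.holo' E4_coe τ

lemma analyticAt_E6 (τ : ℍ) : AnalyticAt ℂ E6 τ :=
  analyticAt_of_coe_eq ModularForm.E₆.holo' E6_coe τ

lemma E4_cube_sub_E6_sq_ne_zero (τ : ℍ) : E4 τ ^ 3 - E6 τ ^ 2 ≠ 0 := by
  have hΔ := ModularForm.discriminant_ne_zero τ
  rw [ModularForm.discriminant_eq_E₄_cube_sub_E₆_sq] at hΔ
  rw [E4_coe, E6_coe]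
  exact (div_ne_zero_iff.mp hΔ).1

lemma deriv_E4_ne_zero {τ : ℍ} (hτ : E4 τ = 0) : deriv E4 τ ≠ 0 := by
  have hE6 : E6 τ ≠ 0 := fun h ↦ E4_cube_sub_E6_sq_ne_zero τ (by simp [hτ, h])
  have hE4' : (2 * π * Complex.I)⁻¹ * deriv E4 τ = -(1 / 3) * E6 τ := by
    rw [(eventuallyEq_comp_ofComplex E4_coe τ).deriv_eq, E6_coe, ← serreDerivative_E₄,
      serreDerivative_apply, ← E4_coe, hτ, mul_zero, sub_zero, normalizedDerivOfComplex]
  refine right_ne_zero_of_mul (a := (2 * π * Complex.I)⁻¹) ?_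
  rw [hE4']
  exact mul_ne_zero (by norm_num) hE6

lemma analyticAt_J (τ : ℍ) : AnalyticAt ℂ J τ :=
  ((analyticAt_E4 τ).pow 3).div (((analyticAt_E4 τ).pow 3).sub ((analyticAt_E6 τ).pow 2))
    (E4_cube_sub_E6_sq_ne_zero τ)

lemma analyticOrderAt_J {τ : ℍ} (hτ : E4 τ = 0) : analyticOrderAt J τ = 3 := by
  have hE4 := analyticAt_E4 τ
  have hΔ := (((hE4.pow 3).sub ((analyticAt_E6 τ).pow 2)).inv (E4_cube_sub_E6_sq_ne_zero τ))
  have hJ : J = E4 ^ 3 * (E4 ^ 3 - E6 ^ 2)⁻¹ := funext fun z ↦ div_eq_mul_inv _ _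
  rw [hJ, analyticOrderAt_mul (hE4.pow 3) hΔ, analyticOrderAt_pow hE4,
    hE4.analyticOrderAt_eq_one_of_zero_deriv_ne_zero hτ (deriv_E4_ne_zero hτ),
    hΔ.analyticOrderAt_eq_zero.mpr (inv_ne_zero (E4_cube_sub_E6_sq_ne_zero τ))]
  norm_num

lemma J_smul (γ : SL(2, ℤ)) (τ : ℍ) : J (γ • τ : ℍ) = J τ := by
  have hγ : Matrix.SpecialLinearGroup.mapGL ℝ γ ∈ 𝒮ℒ := ⟨γ, rfl⟩
  set j : ℂ := denom (Matrix.SpecialLinearGroup.mapGL ℝ γ) τ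
  have hj : j ≠ 0 := denom_ne_zero _ τ
  have h4 : E4 (γ • τ : ℍ) = j ^ 4 * E4 τ := by
    rw [E4_coe, E4_coe]
    exact SlashInvariantForm.slash_action_eqn'' ModularForm.E₄ hγ τ
  have h6 : E6 (γ • τ : ℍ) = j ^ 6 * E6 τ := by
    rw [E6_coe, E6_coe]
    exact SlashInvariantForm.slash_action_eqn'' ModularForm.E₆ hγ τ
  have hnum : E4 (γ • τ : ℍ) ^ 3 = j ^ 12 * E4 τ ^ 3 := by rw [h4]; ring
  have hden : E4 (γ • τ : ℍ) ^ 3 - E6 (γ • τ : ℍ) ^ 2 = j ^ 12 * (E4 τ ^ 3 - E6 τ ^ 2) := by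
    rw [h4, h6]
    ring
  rw [J, hden, hnum, mul_div_mul_left _ _ (pow_ne_zero 12 hj), J]

end EisensteinSeries

section EllipticPoint

lemma coe_S_mul_T_smul (τ : ℍ) :
    ((ModularGroup.S * ModularGroup.T : SL(2, ℤ)) • τ : ℍ) = -((τ : ℂ) + 1)⁻¹ := by
  rw [mul_smul, modular_T_smul, modular_S_smul]
  simp [add_comm, ← inv_neg]

lemma denom_S_mul_T (z : ℂ) :
    denom (Matrix.SpecialLinearGroup.mapGL ℝ (ModularGroup.S * ModularGroup.T)) z = z + 1 := by
  simp [denom, ModularGroup.coe_S, ModularGroup.coe_T, -map_mul]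

lemma rho_sq_add_rho_add_one : rho ^ 2 + rho + 1 = 0 := by
  have hgeom := (Complex.isPrimitiveRoot_exp 3 (by norm_num)).geom_sum_eq_zero (by norm_num)
  simp only [Finset.sum_range_succ, Finset.sum_range_zero, Nat.cast_ofNat] at hgeom
  rw [rho]
  linear_combination hgeom

lemma rho_im_pos : 0 < rho.im := by
  have hrho : rho = Complex.exp ((2 * π / 3 : ℝ) * Complex.I) := by
    rw [rho]
    push_cast
    ring_nf
  rw [hrho, Complex.exp_ofReal_mul_I_im]
  apply Real.sin_pos_of_pos_of_lt_pi <;> linarith [Real.pi_pos]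

lemma rho_add_one_ne_zero : rho + 1 ≠ 0 := by
  intro h
  have hρ := rho_sq_add_rho_add_one
  norm_num [eq_neg_of_add_eq_zero_left h] at hρ

lemma one_sub_rho_ne_zero : 1 - rho ≠ 0 := by
  intro h
  have hρ := rho_sq_add_rho_add_one
  norm_num [← sub_eq_zero.mp h] at hρ

lemma rho_add_one_inv : (rho + 1)⁻¹ = -rho := by
  refine inv_eq_of_mul_eq_one_right ?_
  linear_combination -rho_sq_add_rho_add_one

/-- The elliptic point `ρ` as an element of the upper half-plane. -/
def rhoUHP : ℍ := ⟨rho, rho_im_pos⟩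

@[simp]
lemma coe_rhoUHP : (rhoUHP : ℂ) = rho := rfl

lemma S_mul_T_smul_rhoUHP : (ModularGroup.S * ModularGroup.T : SL(2, ℤ)) • rhoUHP = rhoUHP := by
  ext
  rw [coe_S_mul_T_smul, coe_rhoUHP, rho_add_one_inv, neg_neg]

lemma E4_rho : E4 rho = 0 := by
  rw [← coe_rhoUHP, E4_coe]
  refine slashInvariantForm_eq_zero_of_smul_eq_self _ (MonoidHom.mem_range.mpr ⟨_, rfl⟩)
    S_mul_T_smul_rhoUHP ?_
  rw [denom_S_mul_T, coe_rhoUHP, zpow_ofNat]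
  intro h
  refine mul_ne_zero one_sub_rho_ne_zero rho_add_one_ne_zero ?_
  linear_combination (rho ^ 2 + 3 * rho + 1) * rho_sq_add_rho_add_one - h

lemma J_comp_neg_inv_add_one_eventuallyEq (τ : ℍ) : J ∘ (fun z ↦ -(z + 1)⁻¹) =ᶠ[𝓝 (τ : ℂ)] J := by
  filter_upwards [isOpen_upperHalfPlaneSet.mem_nhds τ.im_pos] with z hz
  have := J_smul (ModularGroup.S * ModularGroup.T) ⟨z, hz⟩
  rwa [coe_S_mul_T_smul] at this

lemma one_sub_rho_sq_mul_iteratedDeriv_four_J :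
    (1 - rho ^ 2) * iteratedDeriv 4 J rho = 12 * rho * iteratedDeriv 3 J rho := by
  have hφρ : -(rho + 1)⁻¹ = rho := by rw [rho_add_one_inv, neg_neg]
  have hφ : AnalyticAt ℂ (fun z : ℂ ↦ -(z + 1)⁻¹) rho :=
    ((analyticAt_id.add analyticAt_const).inv rho_add_one_ne_zero).neg
  have hJ : AnalyticAt ℂ J (-(rho + 1)⁻¹) := by
    rw [hφρ]
    exact analyticAt_J rhoUHP
  have hJord : (3 : ℕ) ≤ analyticOrderAt J (-(rho + 1)⁻¹) := by
    rw [hφρ]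
    exact (analyticOrderAt_J (τ := rhoUHP) E4_rho).ge
  have hinvariant : J ∘ (fun z ↦ -(z + 1)⁻¹) =ᶠ[𝓝 rho] J :=
    J_comp_neg_inv_add_one_eventuallyEq rhoUHP
  have hρ3 : rho ^ 3 = 1 := by linear_combination (rho - 1) * rho_sq_add_rho_add_one
  have hφ₁ : deriv (fun z : ℂ ↦ -(z + 1)⁻¹) rho = rho ^ 2 := by
    rw [← iteratedDeriv_one, iteratedDeriv_neg_inv_add_one, rho_add_one_inv]
    simp
  have hφ₂ : iteratedDeriv 2 (fun z : ℂ ↦ -(z + 1)⁻¹) rho = 2 := by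
    rw [iteratedDeriv_neg_inv_add_one, rho_add_one_inv, Nat.factorial_two]
    push_cast
    linear_combination 2 * hρ3
  have hchain : iteratedDeriv 4 J rho = (rho ^ 2) ^ 4 * iteratedDeriv 4 J rho +
      6 * (rho ^ 2) ^ 2 * 2 * iteratedDeriv 3 J rho := by
    have := iteratedDeriv_succ_comp_of_le_analyticOrderAt (φ := fun z ↦ -(z + 1)⁻¹) hJ hφ hJord
    rwa [hinvariant.iteratedDeriv_eq, hφρ, hφ₁, hφ₂] at this
  linear_combination hchain +
    ((rho ^ 5 + rho ^ 2) * iteratedDeriv 4 J rho + 12 * rho * iteratedDeriv 3 J rho) * hρ3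

end EllipticPoint

/-- `J` vanishes to order exactly 3 at `ρ`, and `J''''(ρ) = 12·(1+ρ)/(1−ρ)·J'''(ρ)`. -/
theorem J_derivatives_at_rho :
    J rho = 0 ∧
    deriv J rho = 0 ∧
    iteratedDeriv 2 J rho = 0 ∧
    iteratedDeriv 3 J rho ≠ 0 ∧
    iteratedDeriv 4 J rho = 12 * ((1 + rho) / (1 - rho)) * iteratedDeriv 3 J rho := by
  have hJ : analyticOrderAt J rho = (3 : ℕ) := analyticOrderAt_J (τ := rhoUHP) E4_rho
  obtain ⟨hlt, h3⟩ :=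
    (analyticOrderAt_eq_nat_iff_iteratedDeriv_eq_zero (analyticAt_J rhoUHP)).mp hJ
  refine ⟨?_, ?_, hlt 2 (by norm_num), h3, ?_⟩
  · simpa using hlt 0 (by norm_num)
  · simpa using hlt 1 (by norm_num)
  · rw [mul_div_assoc', div_mul_eq_mul_div, eq_div_iff one_sub_rho_ne_zero]
    refine mul_left_cancel₀ rho_add_one_ne_zero ?_
    linear_combination one_sub_rho_sq_mul_iteratedDeriv_four_J -
      12 * iteratedDeriv 3 J rho * rho_sq_add_rho_add_one
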